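/- For every ε ∈ (0,1) there exists Δ₀ such that for every integer Δ ≥ Δ₀ the following holds. Let G be a finite triangle-free simple graph with maximum degree at most Δ and set q := ⌊(1+ε)·Δ/ln Δ⌋. Then there exists a partial coloring φ : V → Option (Fin q) such that: (i) φ is proper, i.e., for every edge (u,v), if φ(u) and φ(v) are both of the form some c, some c' then c ≠ c'; (ii) every vertex v has at least Δ^{ε/2} available colors, i.e., |{c ∈ Fin q : ∀ u ∈ N(v), φ(u) ≠ some c}| ≥ Δ^{ε/2}; and (iii) every vertex v has at most ε·q/2 uncolored neighbors, i.e., |{u ∈ N(v) : φ(u) = none}| ≤ ε·q/2. -/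

import Mathlib

/-!
Every triangle-free graph of maximum degree at most `Δ`, with `Δ` large, is properly colorable with
`⌊(1 + ε / 2) * Δ / log Δ⌋` colors (Molloy's theorem). Compared with `q` this leaves at least
`Δ ^ (ε / 2)` colors entirely unused, and these are available at every vertex.

The coloring is found by counting. A proper coloring of the subgraph induced by `S` extends to a new
vertex `v` in as many ways as `v` has available colors, and by induction on `S` this number is at
least a fixed `l > 0` on average. To see this, resample the colors of the neighbors of `v` with all
others fixed. Since the neighbors form an independent set, each of them chooses uniformly and
independently from its own list. Leaving aside the colors in lists of size at most a constant `s`,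
convexity of `exp` shows that on average at least about `K * exp (-Δ / K)` of the `K` or more
remaining colors avoid all neighbors. Markov's inequality shows that typically few lists are so
short: removing a vertex `u` divides the number of colorings by at least `l` (induction hypothesis),
while at most `s` colorings in which `u` has at most `s` available colors restrict to the same one.
-/

open Finset Filter

section Averaging

variable {ι : Type*}

lemma mul_exp_neg_div_le_sum_exp_neg (O : Finset ι) (x : ι → ℝ) {b K : ℝ} (hb : 0 ≤ b)
    (hx : ∑ i ∈ O, x i ≤ b) (hK : 0 < K) (hKO : K ≤ #O) :
    K * Real.exp (-(b / K)) ≤ ∑ i ∈ O, Real.exp (-x i) := by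
  have tangent (i : ι) : Real.exp (-(b / K)) * (1 + b / K - x i) ≤ Real.exp (-x i) := by
    rw [show -x i = -(b / K) + (b / K - x i) by ring, Real.exp_add]
    gcongr
    linarith [Real.add_one_le_exp (b / K - x i)]
  have hKb : K ≤ #O * (1 + b / K) - b := by
    have : K * (1 + b / K) ≤ #O * (1 + b / K) := by gcongr
    have : K * (1 + b / K) = K + b := by field_simp
    linarith
  calc K * Real.exp (-(b / K))
      ≤ (#O * (1 + b / K) - ∑ i ∈ O, x i) * Real.exp (-(b / K)) := by gcongr; linarith
    _ = ∑ i ∈ O, Real.exp (-(b / K)) * (1 + b / K - x i) := by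
      rw [← mul_sum, sum_sub_distrib, sum_const, nsmul_eq_mul, mul_comm]
    _ ≤ ∑ i ∈ O, Real.exp (-x i) := sum_le_sum fun i _ => tangent i

lemma card_le_two_mul_card_filter_le (A : Finset ι) {X : ι → ℝ} (hX : ∀ i ∈ A, 0 ≤ X i) {M : ℝ}
    (hM : 0 < M) (hsum : ∑ i ∈ A, X i ≤ M / 2 * #A) :
    (#A : ℝ) ≤ 2 * #{i ∈ A | X i ≤ M} := by
  have markov : #{i ∈ A | ¬ X i ≤ M} * M ≤ ∑ i ∈ A, X i := by
    rw [← nsmul_eq_mul]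
    refine (card_nsmul_le_sum _ X M fun i hi => (not_le.1 (mem_filter.1 hi).2).le).trans ?_
    exact sum_le_sum_of_subset_of_nonneg (filter_subset _ _) fun i hi _ => hX i hi
  have half : (#{i ∈ A | ¬ X i ≤ M} : ℝ) ≤ #A / 2 :=
    le_of_mul_le_mul_right (by linarith) hM
  have split : (#{i ∈ A | X i ≤ M} : ℝ) + #{i ∈ A | ¬ X i ≤ M} = #A :=
    mod_cast card_filter_add_card_filter_not _
  linarith

end Averaging

section ListChoice

variable {ι α : Type*} [Fintype ι] [DecidableEq α]

/-- The load of the color `c`, a sum chosen such that `exp (-colorLoad L s c)` bounds from below the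
probability that no `i` chooses `c` when every `i` picks an element of its list `L i` uniformly and
independently, provided that all lists containing `c` have more than `s` elements. Shorter lists do
not contribute to the sum, which keeps its total over all colors small. -/
noncomputable def colorLoad (L : ι → Finset α) (s : ℕ) (c : α) : ℝ :=
  ∑ i with s < #(L i) ∧ c ∈ L i, ((#(L i) : ℝ) - 1)⁻¹

lemma sum_colorLoad_le [Fintype α] (L : ι → Finset α) {s : ℕ} (hs : 0 < s) :
    ∑ c, colorLoad L s c ≤ (1 + 1 / s) * Fintype.card ι := by
  have swap : ∑ c, colorLoad L s c = ∑ i with s < #(L i), #(L i) * ((#(L i) : ℝ) - 1)⁻¹ := by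
    simp only [colorLoad, sum_filter, ite_and]
    rw [sum_comm]
    refine sum_congr rfl fun i _ => ?_
    split_ifs <;> simp
  have term (i : ι) (hi : s < #(L i)) : #(L i) * ((#(L i) : ℝ) - 1)⁻¹ ≤ 1 + 1 / s := by
    have hs' : (0 : ℝ) < s := mod_cast hs
    have hsL : (s : ℝ) ≤ #(L i) - 1 := by
      have : (s : ℝ) + 1 ≤ #(L i) := mod_cast hi
      linarith
    calc #(L i) * ((#(L i) : ℝ) - 1)⁻¹ = 1 + 1 / (#(L i) - 1) := by
          have : (#(L i) : ℝ) - 1 ≠ 0 := by linarith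
          field_simp; ring
      _ ≤ 1 + 1 / s := by gcongr
  calc ∑ c, colorLoad L s c ≤ #{i | s < #(L i)} • (1 + 1 / (s : ℝ)) :=
        swap.trans_le (sum_le_card_nsmul _ _ _ fun i hi => term i (mem_filter.1 hi).2)
    _ ≤ (1 + 1 / s) * Fintype.card ι := by
      rw [nsmul_eq_mul, mul_comm]
      gcongr
      exact card_le_univ _

variable [DecidableEq ι]

lemma filter_piFinset_forall_ne (L : ι → Finset α) (c : α) :
    {h ∈ Fintype.piFinset L | ∀ i, h i ≠ c} = Fintype.piFinset fun i => (L i).erase c := by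
  ext h
  simp only [mem_filter, Fintype.mem_piFinset, mem_erase, ← forall_and, and_comm]

lemma mul_exp_neg_inv_sub_one_le {x : ℝ} (hx : 1 < x) : x * Real.exp (-(x - 1)⁻¹) ≤ x - 1 := by
  have hx' : 0 < x - 1 := sub_pos.2 hx
  rw [Real.exp_neg, ← div_eq_mul_inv, div_le_iff₀ (Real.exp_pos _)]
  calc x = (x - 1) * ((x - 1)⁻¹ + 1) := by field_simp; ring
    _ ≤ (x - 1) * Real.exp (x - 1)⁻¹ := by gcongr; exact Real.add_one_le_exp _

lemma card_piFinset_mul_exp_neg_colorLoad_le (L : ι → Finset α) {s : ℕ} (hs : 0 < s) {c : α}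
    (hc : ∀ i, c ∈ L i → s < #(L i)) :
    #(Fintype.piFinset L) * Real.exp (-colorLoad L s c) ≤
      #{h ∈ Fintype.piFinset L | ∀ i, h i ≠ c} := by
  rw [filter_piFinset_forall_ne, Fintype.card_piFinset, Fintype.card_piFinset, colorLoad,
    sum_filter, ← sum_neg_distrib, Real.exp_sum]
  push_cast
  rw [← prod_mul_distrib]
  refine prod_le_prod (fun i _ => by positivity) fun i _ => ?_
  by_cases hci : c ∈ L i
  · have hcard : 1 < #(L i) := by have := hc i hci; omega
    rw [if_pos ⟨hc i hci, hci⟩, card_erase_of_mem hci, Nat.cast_pred (by omega)]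
    exact mul_exp_neg_inv_sub_one_le (mod_cast hcard)
  · simp [hci]

lemma card_piFinset_mul_le_sum_card_forall_ne [Fintype α] (L : ι → Finset α) {s : ℕ} (hs : 0 < s)
    {K : ℝ} (hK : 0 < K) (hKα : K + s * #{i | #(L i) ≤ s} ≤ Fintype.card α) :
    #(Fintype.piFinset L) * (K * Real.exp (-((1 + 1 / s) * Fintype.card ι / K))) ≤
      ∑ h ∈ Fintype.piFinset L, (#{c | ∀ i, h i ≠ c} : ℝ) := by
  set B : Finset α := ({i | #(L i) ≤ s} : Finset ι).biUnion L with hB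
  have hBcard : #B ≤ #{i | #(L i) ≤ s} * s :=
    card_biUnion_le_card_mul _ _ _ fun i hi => (mem_filter.1 hi).2
  have hKB : K ≤ #Bᶜ := by
    have hBB : (#B : ℝ) + #Bᶜ = Fintype.card α := mod_cast card_add_card_compl B
    have : (#B : ℝ) ≤ #{i | #(L i) ≤ s} * s := mod_cast hBcard
    linarith
  have load_nonneg (c : α) : 0 ≤ colorLoad L s c := sum_nonneg fun i hi => by
    have : (1 : ℝ) ≤ #(L i) := mod_cast (Nat.zero_lt_of_lt (mem_filter.1 hi).2.1)
    exact inv_nonneg.2 (by linarith)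
  have load_le : ∑ c ∈ Bᶜ, colorLoad L s c ≤ (1 + 1 / s) * Fintype.card ι :=
    (sum_le_univ_sum_of_nonneg load_nonneg).trans (sum_colorLoad_le L hs)
  have big_of_mem (c : α) (hc : c ∈ Bᶜ) (i : ι) (hci : c ∈ L i) : s < #(L i) := by
    by_contra! hi
    exact mem_compl.1 hc (mem_biUnion.2 ⟨i, by simpa using hi, hci⟩)
  calc #(Fintype.piFinset L) * (K * Real.exp (-((1 + 1 / s) * Fintype.card ι / K)))
      ≤ #(Fintype.piFinset L) * ∑ c ∈ Bᶜ, Real.exp (-colorLoad L s c) := by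
        gcongr
        exact mul_exp_neg_div_le_sum_exp_neg _ _ (by positivity) load_le hK hKB
    _ = ∑ c ∈ Bᶜ, #(Fintype.piFinset L) * Real.exp (-colorLoad L s c) := mul_sum _ _ _
    _ ≤ ∑ c ∈ Bᶜ, (#{h ∈ Fintype.piFinset L | ∀ i, h i ≠ c} : ℝ) :=
        sum_le_sum fun c hc => card_piFinset_mul_exp_neg_colorLoad_le L hs (big_of_mem c hc)
    _ ≤ ∑ c, (#{h ∈ Fintype.piFinset L | ∀ i, h i ≠ c} : ℝ) :=
        sum_le_univ_sum_of_nonneg fun c => Nat.cast_nonneg _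
    _ = ∑ h ∈ Fintype.piFinset L, (#{c | ∀ i, h i ≠ c} : ℝ) := by
        simp only [card_filter, Nat.cast_sum]
        exact sum_comm

end ListChoice

section PartialColorings

variable {V α : Type*} [Fintype V] [DecidableEq α] {G : SimpleGraph V} [DecidableRel G.Adj]

section AvailableColors

variable [Fintype α]

variable (G) in
/-- The colors that no neighbor of `v` has in the partial coloring `f`; `none` means uncolored. -/
def availableColors (f : V → Option α) (v : V) : Finset α := {c | ∀ u, G.Adj v u → f u ≠ some c}

lemma mem_availableColors {f : V → Option α} {v : V} {c : α} :
    c ∈ availableColors G f v ↔ ∀ u, G.Adj v u → f u ≠ some c := by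
  simp [availableColors]

lemma availableColors_congr {f g : V → Option α} {v : V} (h : ∀ u, G.Adj v u → f u = g u) :
    availableColors G f v = availableColors G g v := by
  ext c
  simp +contextual only [mem_availableColors, h]

end AvailableColors

variable [DecidableEq V]

/-- The partial coloring `g` with the vertices in `T` recolored by `h`. -/
def recolor {T : Finset V} (g : V → Option α) (h : T → α) : V → Option α :=
  fun u => if hu : u ∈ T then some (h ⟨u, hu⟩) else g u

variable [Fintype α]

variable (G α) in
/-- The proper partial colorings of `G` whose set of colored vertices is exactly `S`, that is, the
proper colorings of the subgraph induced by `S`, as functions on all of `V`. -/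
def partialColorings (S : Finset V) : Finset (V → Option α) :=
  {f | (∀ u, f u = none ↔ u ∉ S) ∧ ∀ u c, f u = some c → c ∈ availableColors G f u}

lemma mem_partialColorings {S : Finset V} {f : V → Option α} : f ∈ partialColorings α G S ↔
    (∀ u, f u = none ↔ u ∉ S) ∧ ∀ u c, f u = some c → c ∈ availableColors G f u := by
  simp [partialColorings]

lemma availableColors_recolor {T : Finset V} {u : V} (hu : ∀ w ∈ T, ¬ G.Adj u w)
    (g : V → Option α) (h : T → α) :
    availableColors G (recolor g h) u = availableColors G g u :=
  availableColors_congr fun w huw => dif_neg fun hw => hu w hw huw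

lemma uncolor_mem_partialColorings {S : Finset V} {f : V → Option α}
    (hf : f ∈ partialColorings α G S) (T : Finset V) :
    T.piecewise (fun _ => none) f ∈ partialColorings α G (S \ T) := by
  obtain ⟨hdom, hproper⟩ := mem_partialColorings.1 hf
  have of_uncolor (u : V) (c : α) (h : T.piecewise (fun _ => none) f u = some c) :
      f u = some c := by
    by_cases hu : u ∈ T <;> simp_all
  refine mem_partialColorings.2 ⟨fun u => ?_, fun u c hu => mem_availableColors.2 ?_⟩
  · by_cases hu : u ∈ T <;> simp [hu, hdom]
  · exact fun w huw hw =>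
      mem_availableColors.1 (hproper u c (of_uncolor u c hu)) w huw (of_uncolor w c hw)

lemma recolor_mem_partialColorings {R T : Finset V} (hT : G.IsIndepSet T) {g : V → Option α}
    (hg : g ∈ partialColorings α G R) {h : T → α} (hh : ∀ u : T, h u ∈ availableColors G g u) :
    recolor g h ∈ partialColorings α G (R ∪ T) := by
  obtain ⟨hdom, hproper⟩ := mem_partialColorings.1 hg
  refine mem_partialColorings.2 ⟨fun u => ?_, fun u c hu => ?_⟩
  · by_cases huT : u ∈ T <;> simp [recolor, huT, hdom]
  by_cases huT : u ∈ T
  · obtain rfl : h ⟨u, huT⟩ = c := by simpa [recolor, huT] using hu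
    rw [availableColors_recolor fun w hw huw => hT huT hw huw.ne huw]
    exact hh ⟨u, huT⟩
  · have hgu : g u = some c := by simpa [recolor, huT] using hu
    refine mem_availableColors.2 fun w huw hw => ?_
    by_cases hwT : w ∈ T
    · obtain rfl : h ⟨w, hwT⟩ = c := by simpa [recolor, hwT] using hw
      exact mem_availableColors.1 (hh ⟨w, hwT⟩) u huw.symm hgu
    · exact mem_availableColors.1 (hproper u c hgu) w huw (by simpa [recolor, hwT] using hw)

lemma exists_recolor_eq {R T : Finset V} (hRT : Disjoint R T) (hT : G.IsIndepSet T)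
    {f : V → Option α} (hf : f ∈ partialColorings α G (R ∪ T)) :
    ∃ g ∈ partialColorings α G R, ∃ h : T → α, (∀ u : T, h u ∈ availableColors G g u) ∧
      recolor g h = f := by
  obtain ⟨hdom, hproper⟩ := mem_partialColorings.1 hf
  have hcolored (u : T) : ∃ c, f u = some c :=
    Option.ne_none_iff_exists'.1 fun hu => (hdom u).1 hu (mem_union_right R u.2)
  choose h hfh using hcolored
  set g : V → Option α := T.piecewise (fun _ => none) f with hg
  have hgh : recolor g h = f := by
    ext1 u
    by_cases hu : u ∈ T
    · simp [recolor, hu, ← hfh ⟨u, hu⟩]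
    · simp [recolor, hg, hu]
  refine ⟨g, ?_, h, fun u => ?_, hgh⟩
  · simpa [union_sdiff_cancel_right hRT] using uncolor_mem_partialColorings hf T
  · have hu := hproper u (h u) (hfh u)
    rwa [← hgh, availableColors_recolor fun w hw huw => hT u.2 hw huw.ne huw] at hu

lemma recolor_injective {R T : Finset V} (hRT : Disjoint R T) {g g' : V → Option α}
    (hg : g ∈ partialColorings α G R) (hg' : g' ∈ partialColorings α G R) {h h' : T → α}
    (heq : recolor g h = recolor g' h') : g = g' ∧ h = h' := by
  have hnone {g : V → Option α} (hg : g ∈ partialColorings α G R) {u : V} (hu : u ∈ T) :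
      g u = none := ((mem_partialColorings.1 hg).1 u).2 (disjoint_right.1 hRT hu)
  refine ⟨funext fun u => ?_, funext fun u => ?_⟩
  · by_cases hu : u ∈ T
    · rw [hnone hg hu, hnone hg' hu]
    · simpa [recolor, hu] using congrFun heq u
  · simpa [recolor] using congrFun heq u

lemma sum_partialColorings_union {R T : Finset V} (hRT : Disjoint R T) (hT : G.IsIndepSet T)
    {M : Type*} [AddCommMonoid M] (F : (V → Option α) → M) :
    ∑ f ∈ partialColorings α G (R ∪ T), F f = ∑ g ∈ partialColorings α G R,
      ∑ h ∈ Fintype.piFinset fun u : T => availableColors G g u, F (recolor g h) := by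
  rw [sum_sigma']
  refine (sum_bij (fun x _ => recolor x.1 x.2) ?_ ?_ ?_ fun _ _ => rfl).symm
  · rintro ⟨g, h⟩ hx
    obtain ⟨hg, hh⟩ := mem_sigma.1 hx
    exact recolor_mem_partialColorings hT hg (Fintype.mem_piFinset.1 hh)
  · rintro ⟨g, h⟩ hx ⟨g', h'⟩ hx' heq
    obtain ⟨rfl, rfl⟩ := recolor_injective hRT (mem_sigma.1 hx).1 (mem_sigma.1 hx').1 heq
    rfl
  · intro f hf
    obtain ⟨g, hg, h, hh, rfl⟩ := exists_recolor_eq hRT hT hf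
    exact ⟨⟨g, h⟩, mem_sigma.2 ⟨hg, Fintype.mem_piFinset.2 hh⟩, rfl⟩

lemma sum_partialColorings_insert {S : Finset V} {v : V} (hv : v ∉ S) {M : Type*}
    [AddCommMonoid M] (F : Finset α → M) :
    ∑ f ∈ partialColorings α G (insert v S), F (availableColors G f v) =
      ∑ g ∈ partialColorings α G S, #(availableColors G g v) • F (availableColors G g v) := by
  have hloop : ∀ w ∈ ({v} : Finset V), ¬ G.Adj v w := by simp
  rw [insert_eq, union_comm, sum_partialColorings_union (disjoint_singleton_right.2 hv) (by simp)]
  refine sum_congr rfl fun g _ => ?_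
  simp only [availableColors_recolor hloop, sum_const, Fintype.card_piFinset]
  rw [prod_coe_sort {v} fun u => #(availableColors G g u), prod_singleton]

lemma card_partialColorings_insert {S : Finset V} {v : V} (hv : v ∉ S) :
    #(partialColorings α G (insert v S)) =
      ∑ g ∈ partialColorings α G S, #(availableColors G g v) := by
  simpa using sum_partialColorings_insert (G := G) (α := α) hv fun _ => (1 : ℕ)

lemma card_filter_partialColorings_insert_le {S : Finset V} {v : V} (hv : v ∉ S) (s : ℕ) :
    #{f ∈ partialColorings α G (insert v S) | #(availableColors G f v) ≤ s} ≤
      #(partialColorings α G S) * s := by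
  rw [card_filter, sum_partialColorings_insert hv fun A => if #A ≤ s then 1 else 0]
  refine sum_le_card_nsmul _ _ _ fun g _ => ?_
  split_ifs with hs <;> simp [hs]

end PartialColorings

section TriangleFree

variable {V α : Type*} [Fintype V] [DecidableEq V] [Fintype α] [DecidableEq α]
  {G : SimpleGraph V} [DecidableRel G.Adj]

lemma availableColors_recolor_neighbors {S : Finset V} {v : V} {g : V → Option α}
    (hg : g ∈ partialColorings α G (S \ G.neighborFinset v))
    (h : ↥(S ∩ G.neighborFinset v) → α) :
    availableColors G (recolor g h) v = ({c | ∀ u, h u ≠ c} : Finset α) := by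
  ext c
  simp only [mem_availableColors, mem_filter_univ]
  refine ⟨fun hc u hu => ?_, fun hc u huv => ?_⟩
  · exact hc u ((G.mem_neighborFinset v u).1 (mem_inter.1 u.2).2) (by simp [recolor, hu])
  · by_cases hu : u ∈ S ∩ G.neighborFinset v
    · simpa [recolor, hu] using hc ⟨u, hu⟩
    · have : g u = none := ((mem_partialColorings.1 hg).1 u).2 (by simp [huv])
      simp [recolor, hu, this]

variable (G) in
/-- The neighbors of `v` in `S` that have at most `s` available colors. These are the ones whose
lists are too short for the estimate on `colorLoad`. -/
def scarceNeighbors (S : Finset V) (v : V) (s : ℕ) (f : V → Option α) : Finset V :=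
  {u ∈ S ∩ G.neighborFinset v | #(availableColors G f u) ≤ s}

lemma scarceNeighbors_recolor {S : Finset V} {v : V} (hN : G.IsIndepSet (G.neighborSet v)) (s : ℕ)
    (g : V → Option α) (h : ↥(S ∩ G.neighborFinset v) → α) :
    scarceNeighbors G S v s (recolor g h) = scarceNeighbors G S v s g :=
  filter_congr fun u hu => by
    rw [availableColors_recolor fun w hw huw => ?_]
    simp only [mem_inter, SimpleGraph.mem_neighborFinset] at hu hw
    exact hN hu.2 hw.2 huw.ne huw

-- The colors on `S ∩ N(v)` are resampled with all other colors fixed: since `N(v)` is independent,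
-- this is a uniform choice from independent lists, and it leaves the scarce neighbors unchanged.
lemma card_scarceNeighbors_le_mul_le_sum_card_availableColors (S : Finset V) {v : V}
    (hN : G.IsIndepSet (G.neighborSet v)) {s : ℕ} (hs : 0 < s) {K M : ℝ} (hK : 0 < K)
    (hKM : K + s * M ≤ Fintype.card α) :
    #{f ∈ partialColorings α G S | (#(scarceNeighbors G S v s f) : ℝ) ≤ M} *
        (K * Real.exp (-((1 + 1 / s) * G.degree v / K))) ≤
      ∑ f ∈ partialColorings α G S, (#(availableColors G f v) : ℝ) := by
  have hdisj := disjoint_sdiff_inter S (G.neighborFinset v)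
  have hindep : G.IsIndepSet ↑(S ∩ G.neighborFinset v) := hN.mono (by simp)
  have split := sum_partialColorings_union (α := α) hdisj hindep (M := ℝ)
  rw [sdiff_union_inter] at split
  rw [card_filter, Nat.cast_sum, split, split, sum_mul]
  refine sum_le_sum fun g hg => ?_
  simp only [scarceNeighbors_recolor hN, availableColors_recolor_neighbors hg]
  split_ifs with hgM
  · have scarce : #{u : ↥(S ∩ G.neighborFinset v) | #(availableColors G g u) ≤ s} =
        #(scarceNeighbors G S v s g) := by
      rw [scarceNeighbors, card_filter, card_filter]
      exact sum_coe_sort _ fun u => if #(availableColors G g u) ≤ s then 1 else 0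
    have resample := card_piFinset_mul_le_sum_card_forall_ne
      (fun u : ↥(S ∩ G.neighborFinset v) => availableColors G g u) hs hK
      (by rw [scarce]; exact le_trans (by gcongr) hKM)
    refine le_trans ?_ resample
    rw [sum_const, nsmul_eq_mul, Nat.cast_one, mul_one, Fintype.card_coe]
    gcongr
    exact card_le_card inter_subset_right
  · simpa using sum_nonneg fun _ _ => Nat.cast_nonneg _

lemma sum_card_scarceNeighbors_le (S : Finset V) (v : V) (s : ℕ) {l : ℝ} (hl : 0 < l)
    (hgrowth : ∀ u ∈ S, l * #(partialColorings α G (S.erase u)) ≤ #(partialColorings α G S)) :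
    ∑ f ∈ partialColorings α G S, (#(scarceNeighbors G S v s f) : ℝ) ≤
      G.degree v * s / l * #(partialColorings α G S) := by
  have term (u : V) (hu : u ∈ S) :
      (#{f ∈ partialColorings α G S | #(availableColors G f u) ≤ s} : ℝ) ≤
        s / l * #(partialColorings α G S) := by
    have hcard := card_filter_partialColorings_insert_le (α := α) (G := G) (notMem_erase u S) s
    rw [insert_erase hu] at hcard
    calc (#{f ∈ partialColorings α G S | #(availableColors G f u) ≤ s} : ℝ)
        ≤ #(partialColorings α G (S.erase u)) * s := mod_cast hcard
      _ = s / l * (l * #(partialColorings α G (S.erase u))) := by field_simp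
      _ ≤ s / l * #(partialColorings α G S) := by gcongr; exact hgrowth u hu
  calc ∑ f ∈ partialColorings α G S, (#(scarceNeighbors G S v s f) : ℝ)
      = ∑ u ∈ S ∩ G.neighborFinset v,
          (#{f ∈ partialColorings α G S | #(availableColors G f u) ≤ s} : ℝ) := by
        simp only [scarceNeighbors, card_filter, Nat.cast_sum]
        exact sum_comm
    _ ≤ #(S ∩ G.neighborFinset v) • (s / l * #(partialColorings α G S)) :=
        sum_le_card_nsmul _ _ _ fun u hu => term u (mem_inter.1 hu).1
    _ ≤ G.degree v * (s / l * #(partialColorings α G S)) := by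
        rw [nsmul_eq_mul]
        gcongr
        exact card_le_card inter_subset_right
    _ = G.degree v * s / l * #(partialColorings α G S) := by ring

lemma mul_card_partialColorings_le_insert {Δ s : ℕ} {K l : ℝ} (hG : G.CliqueFree 3)
    (hdeg : ∀ v, G.degree v ≤ Δ) (hΔ : 0 < Δ) (hs : 0 < s) (hK : 0 < K) (hl : 0 < l)
    (hKα : K + s * (2 * Δ * s / l) ≤ Fintype.card α)
    (hlK : 2 * l ≤ K * Real.exp (-((1 + 1 / s) * Δ / K))) {S : Finset V} {v : V} (hv : v ∉ S) :
    l * #(partialColorings α G S) ≤ #(partialColorings α G (insert v S)) := by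
  induction S using Finset.strongInduction generalizing v with
  | H S ih =>
  set M : ℝ := 2 * Δ * s / l with hM
  set typical := {f ∈ partialColorings α G S | (#(scarceNeighbors G S v s f) : ℝ) ≤ M}
  have hdegv : (G.degree v : ℝ) ≤ Δ := mod_cast hdeg v
  have few_scarce_on_average : ∑ f ∈ partialColorings α G S, (#(scarceNeighbors G S v s f) : ℝ) ≤
      M / 2 * #(partialColorings α G S) := by
    refine (sum_card_scarceNeighbors_le S v s hl fun u hu => ?_).trans ?_
    · simpa only [insert_erase hu] using ih _ (erase_ssubset hu) (notMem_erase u S)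
    · rw [show M / 2 = Δ * s / l by rw [hM]; ring]
      gcongr
  have half_typical : (#(partialColorings α G S) : ℝ) ≤ 2 * #typical :=
    card_le_two_mul_card_filter_le _ (fun f _ => Nat.cast_nonneg _) (by positivity)
      few_scarce_on_average
  calc l * #(partialColorings α G S)
      ≤ #typical * (2 * l) := by linarith [mul_le_mul_of_nonneg_left half_typical hl.le]
    _ ≤ #typical * (K * Real.exp (-((1 + 1 / s) * Δ / K))) := by gcongr
    _ ≤ #typical * (K * Real.exp (-((1 + 1 / s) * G.degree v / K))) := by gcongr
    _ ≤ ∑ f ∈ partialColorings α G S, (#(availableColors G f v) : ℝ) :=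
        card_scarceNeighbors_le_mul_le_sum_card_availableColors S
          (G.isIndepSet_neighborSet_of_triangleFree hG v) hs hK hKα
    _ = #(partialColorings α G (insert v S)) := mod_cast (card_partialColorings_insert hv).symm

lemma nonempty_partialColorings {l : ℝ} (hl : 0 < l)
    (hgrowth : ∀ (S : Finset V), ∀ v ∉ S,
      l * #(partialColorings α G S) ≤ #(partialColorings α G (insert v S))) (S : Finset V) :
    (partialColorings α G S).Nonempty := by
  induction S using Finset.induction_on with
  | empty => exact ⟨fun _ => none, mem_partialColorings.2 (by simp)⟩
  | insert v S hv ih =>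
    have : (0 : ℝ) < #(partialColorings α G S) := mod_cast ih.card_pos
    exact card_pos.1 (mod_cast (mul_pos hl this).trans_le (hgrowth S v hv))

lemma nonempty_coloring_of_mem_partialColorings_univ {f : V → Option α}
    (hf : f ∈ partialColorings α G univ) : Nonempty (G.Coloring α) := by
  obtain ⟨hdom, hproper⟩ := mem_partialColorings.1 hf
  have hcolored (u : V) : ∃ c, f u = some c :=
    Option.ne_none_iff_exists'.1 fun hu => (hdom u).1 hu (mem_univ u)
  choose c hc using hcolored
  refine ⟨SimpleGraph.Coloring.mk c fun {u w} huw heq => ?_⟩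
  exact mem_availableColors.1 (hproper u (c u) (hc u)) w huw (heq ▸ hc w)

end TriangleFree

section Asymptotics

lemma eventually_mul_rpow_mul_log_add_one_le_div_log {β C c : ℝ} (hβ₀ : 0 ≤ β) (hβ₁ : β < 1)
    (hC : 0 ≤ C) (hc : 0 < c) :
    ∀ᶠ n : ℕ in atTop, C * ((n : ℝ) ^ β * Real.log n) + 1 ≤ c * (n / Real.log n) := by
  have log_sq_small : ∀ᶠ x : ℝ in atTop, Real.log x ^ 2 ≤ c / (C + 1) * x ^ (1 - β) := by
    filter_upwards [(isLittleO_log_rpow_rpow_atTop 2 (sub_pos.2 hβ₁)).bound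
      (show 0 < c / (C + 1) by positivity), eventually_ge_atTop 0] with x hx hx₀
    rwa [Real.norm_of_nonneg (by simp [sq_nonneg]), Real.norm_of_nonneg (by positivity),
      Real.rpow_two] at hx
  refine tendsto_natCast_atTop_atTop.eventually
    (p := fun x : ℝ => C * (x ^ β * Real.log x) + 1 ≤ c * (x / Real.log x)) ?_
  filter_upwards [log_sq_small, eventually_ge_atTop 1,
    Real.tendsto_log_atTop.eventually_ge_atTop 1] with x hx hx₁ hlog
  have one_le : 1 ≤ x ^ β * Real.log x := one_le_mul_of_one_le_of_one_le
    (Real.one_le_rpow hx₁ hβ₀) hlog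
  have := zero_lt_one.trans_le hlog
  calc C * (x ^ β * Real.log x) + 1 ≤ (C + 1) * x ^ β * Real.log x ^ 2 / Real.log x := by
        rw [show (C + 1) * x ^ β * Real.log x ^ 2 / Real.log x = (C + 1) * (x ^ β * Real.log x) by
          field_simp]
        linarith
    _ ≤ (C + 1) * x ^ β * (c / (C + 1) * x ^ (1 - β)) / Real.log x := by gcongr
    _ = c * (x / Real.log x) := by
        have : x ^ β * x ^ (1 - β) = x := by
          rw [← Real.rpow_add (by linarith), add_sub_cancel, Real.rpow_one]
        field_simp
        exact this

end Asymptotics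

section Molloy

theorem nonempty_coloring_of_cliqueFree_three {V α : Type*} [Fintype V] [Fintype α]
    {G : SimpleGraph V} [DecidableRel G.Adj] {Δ s : ℕ} {K : ℝ} (hG : G.CliqueFree 3)
    (hdeg : ∀ v, G.degree v ≤ Δ) (hΔ : 0 < Δ) (hs : 0 < s) (hK : 0 < K)
    (hKα : K + 4 * s ^ 2 * (Δ / K * Real.exp ((1 + 1 / s) * Δ / K)) ≤ Fintype.card α) :
    Nonempty (G.Coloring α) := by
  classical
  set l := K * Real.exp (-((1 + 1 / s) * Δ / K)) / 2 with hl
  have hl_pos : 0 < l := by positivity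
  have hKl : K + s * (2 * Δ * s / l) ≤ Fintype.card α := by
    convert hKα using 2
    rw [hl, Real.exp_neg]
    field_simp
    ring
  obtain ⟨f, hf⟩ := nonempty_partialColorings hl_pos (fun S v hv =>
    mul_card_partialColorings_le_insert hG hdeg hΔ hs hK hl_pos hKl (by linarith) hv) univ
  exact nonempty_coloring_of_mem_partialColorings_univ hf

theorem eventually_colorable_of_fintype {ε : ℝ} (hε : 0 < ε) :
    ∀ᶠ Δ : ℕ in atTop, ∀ (V : Type*) [Fintype V] (G : SimpleGraph V) [DecidableRel G.Adj],
      G.CliqueFree 3 → (∀ v, G.degree v ≤ Δ) → G.Colorable ⌊(1 + ε) * Δ / Real.log Δ⌋₊ := by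
  obtain ⟨n, hn⟩ := exists_nat_one_div_lt (half_pos hε)
  set β : ℝ := (1 + 1 / (n + 1)) / (1 + ε / 2) with hβ
  have hβ₁ : β < 1 := (div_lt_one (by positivity)).2 (by linarith)
  filter_upwards [eventually_mul_rpow_mul_log_add_one_le_div_log (by positivity) hβ₁
    (show 0 ≤ 4 * ((n : ℝ) + 1) ^ 2 / (1 + ε / 2) by positivity) (half_pos hε),
    eventually_gt_atTop 1] with Δ hasymp hΔ V _ G _ hG hdeg
  have hΔ' : (1 : ℝ) < Δ := mod_cast hΔ
  have hlog : 0 < Real.log Δ := Real.log_pos hΔ'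
  set K : ℝ := (1 + ε / 2) * (Δ / Real.log Δ) with hK
  have hΔK : Δ / K = Real.log Δ / (1 + ε / 2) := by rw [hK]; field_simp
  have hexp : Real.exp ((1 + 1 / (n + 1)) * Δ / K) = (Δ : ℝ) ^ β := by
    rw [Real.rpow_def_of_pos (by linarith), mul_div_assoc, hΔK, hβ]
    ring_nf
  refine nonempty_coloring_of_cliqueFree_three (s := n + 1) (K := K) hG hdeg (by omega)
    n.succ_pos (by positivity) ?_
  rw [Fintype.card_fin]
  push_cast
  rw [hexp, hΔK]
  have hfloor := Nat.lt_floor_add_one ((1 + ε) * Δ / Real.log Δ)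
  calc K + 4 * ((n : ℝ) + 1) ^ 2 * (Real.log Δ / (1 + ε / 2) * Δ ^ β)
      = K + 4 * ((n : ℝ) + 1) ^ 2 / (1 + ε / 2) * (Δ ^ β * Real.log Δ) := by ring
    _ ≤ K + (ε / 2 * (Δ / Real.log Δ) - 1) := by linarith
    _ = (1 + ε) * Δ / Real.log Δ - 1 := by rw [hK]; ring
    _ ≤ ⌊(1 + ε) * Δ / Real.log Δ⌋₊ := by linarith

lemma colorable_of_forall_finite_subgraph {V : Type*} {G : SimpleGraph V} {k : ℕ}
    (h : ∀ H : G.Subgraph, H.verts.Finite → H.coe.Colorable k) : G.Colorable k :=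
  SimpleGraph.nonempty_hom_of_forall_finite_subgraph_hom fun H hH => (h H hH).some

theorem eventually_colorable {ε : ℝ} (hε : 0 < ε) :
    ∀ᶠ Δ : ℕ in atTop, ∀ (V : Type*) (G : SimpleGraph V) [G.LocallyFinite],
      G.CliqueFree 3 → (∀ v, G.degree v ≤ Δ) → G.Colorable ⌊(1 + ε) * Δ / Real.log Δ⌋₊ := by
  classical
  filter_upwards [eventually_colorable_of_fintype hε] with Δ hfinite V G _ hG hdeg
  refine colorable_of_forall_finite_subgraph fun H hH => ?_
  have := hH.fintype
  refine hfinite H.verts H.coe (hG.comap H.coe_isContained) fun v => ?_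
  convert Nat.le_trans (H.coeCopy.degree_le v) (hdeg _)

end Molloy

section UnusedColors

lemma exists_coloring_le_add_ncard_compl_range {V : Type*} {G : SimpleGraph V} {k q : ℕ}
    (hG : G.Colorable k) (hkq : k ≤ q) :
    ∃ φ : G.Coloring (Fin q), q ≤ k + (Set.range φ)ᶜ.ncard := by
  obtain ⟨ψ⟩ := hG
  set φ : G.Coloring (Fin q) := SimpleGraph.Coloring.mk (fun u => Fin.castLE hkq (ψ u))
    fun huv h => ψ.valid huv (Fin.castLE_injective hkq h)
  refine ⟨φ, ?_⟩
  have hrange : Set.range φ ⊆ Set.range (Fin.castLE hkq) := by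
    rintro _ ⟨u, rfl⟩
    exact ⟨ψ u, rfl⟩
  have hused : (Set.range φ).ncard ≤ k := by
    refine (Set.ncard_le_ncard hrange).trans ?_
    rw [Set.ncard_range_of_injective (Fin.castLE_injective hkq), Nat.card_fin]
  have hsplit := Set.ncard_add_ncard_compl (Set.range φ)
  rw [Nat.card_fin] at hsplit
  omega

lemma ncard_compl_range_le_card_forall_ne_some {V α : Type*} [Fintype α] [DecidableEq α]
    (φ : V → α) (N : Finset V) :
    (Set.range φ)ᶜ.ncard ≤ #{c | ∀ u ∈ N, some (φ u) ≠ some c} := by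
  rw [← Set.ncard_coe_finset]
  refine Set.ncard_le_ncard fun c hc => ?_
  simp_all

end UnusedColors

theorem stmt_15_general {ε : ℝ} (hε : ε ∈ Set.Ioo 0 2) :
    ∃ Δ₀ : ℕ, ∀ Δ : ℕ, Δ₀ ≤ Δ → ∀ (V : Type*) (G : SimpleGraph V) [G.LocallyFinite],
      G.CliqueFree 3 → (∀ v, G.degree v ≤ Δ) →
      ∃ φ : G.Coloring (Fin ⌊(1 + ε) * Δ / Real.log Δ⌋₊),
        (Δ : ℝ) ^ (ε / 2) ≤ (Set.range φ)ᶜ.ncard := by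
  obtain ⟨hε₀, hε₂⟩ := hε
  refine eventually_atTop.1 ?_
  filter_upwards [eventually_colorable (half_pos hε₀),
    eventually_mul_rpow_mul_log_add_one_le_div_log (half_pos hε₀).le (by linarith) zero_le_one
      (half_pos hε₀),
    (Real.tendsto_log_atTop.comp tendsto_natCast_atTop_atTop).eventually_ge_atTop 1]
    with Δ hcolorable hasymp hlog V G _ hG hdeg
  simp only [Function.comp_apply] at hlog
  set k := ⌊(1 + ε / 2) * Δ / Real.log Δ⌋₊ with hk
  set q := ⌊(1 + ε) * Δ / Real.log Δ⌋₊ with hq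
  have hkq : k ≤ q := by rw [hk, hq]; gcongr; linarith
  obtain ⟨φ, hφ⟩ := exists_coloring_le_add_ncard_compl_range (hcolorable V G hG hdeg) hkq
  have hk_le : (k : ℝ) ≤ (1 + ε / 2) * Δ / Real.log Δ := Nat.floor_le (by positivity)
  have lt_hq : (1 + ε) * Δ / Real.log Δ < q + 1 := Nat.lt_floor_add_one _
  have hφ' : (q : ℝ) ≤ k + (Set.range φ)ᶜ.ncard := mod_cast hφ
  refine ⟨φ, ?_⟩
  calc (Δ : ℝ) ^ (ε / 2) ≤ 1 * (Δ ^ (ε / 2) * Real.log Δ) := by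
        rw [one_mul]; exact le_mul_of_one_le_right (by positivity) hlog
    _ ≤ ε / 2 * (Δ / Real.log Δ) - 1 := by linarith
    _ = (1 + ε) * Δ / Real.log Δ - 1 - (1 + ε / 2) * Δ / Real.log Δ := by ring
    _ ≤ (Set.range φ)ᶜ.ncard := by linarith

/-- **Existence of a good partial coloring.** For every `ε ∈ (0,1)` and all sufficiently
large `Δ`: every finite triangle-free graph of maximum degree at most `Δ` admits a proper
partial coloring `φ : V → Option (Fin q)`, `q = ⌊(1+ε)Δ/ln Δ⌋`, in which every vertex has
at least `Δ^{ε/2}` available colors and at most `ε·q/2` uncolored neighbors. -/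
theorem stmt_15 (ε : ℝ) (hε : ε ∈ Set.Ioo (0 : ℝ) 1) :
    ∃ Δ₀ : ℕ, ∀ Δ : ℕ, Δ₀ ≤ Δ →
      ∀ (V : Type) [Fintype V] [DecidableEq V] (G : SimpleGraph V) [DecidableRel G.Adj],
        G.CliqueFree 3 → (∀ v, G.degree v ≤ Δ) →
        ∃ φ : V → Option (Fin ⌊(1 + ε) * (Δ : ℝ) / Real.log (Δ : ℝ)⌋₊),
          (∀ u v, G.Adj u v → ∀ c c', φ u = some c → φ v = some c' → c ≠ c') ∧
          (∀ v, (Δ : ℝ) ^ (ε / 2) ≤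
            ((Finset.univ.filter
              (fun c : Fin ⌊(1 + ε) * (Δ : ℝ) / Real.log (Δ : ℝ)⌋₊ =>
                ∀ u ∈ G.neighborFinset v, φ u ≠ some c)).card : ℝ)) ∧
          (∀ v, (((G.neighborFinset v).filter (fun u => φ u = none)).card : ℝ) ≤
            ε * (⌊(1 + ε) * (Δ : ℝ) / Real.log (Δ : ℝ)⌋₊ : ℝ) / 2) := by
  obtain ⟨Δ₀, h⟩ := stmt_15_general (Set.Ioo_subset_Ioo_right one_le_two hε)
  refine ⟨Δ₀, fun Δ hΔ V _ _ G _ hG hdeg => ?_⟩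
  obtain ⟨φ, hφ⟩ := h Δ hΔ V G hG hdeg
  refine ⟨fun v => some (φ v), fun u v huv => ?_, fun v => hφ.trans ?_, fun v => ?_⟩
  · rintro _ _ ⟨⟩ ⟨⟩
    exact φ.valid huv
  · rw [Nat.cast_le]
    convert ncard_compl_range_le_card_forall_ne_some φ (G.neighborFinset v)
  · simpa using div_nonneg (mul_nonneg hε.1.le (Nat.cast_nonneg _)) zero_le_two
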